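/- Let I be an operator ideal with F(H) ⊆ I ⊆ K(H) (i.e., I is proper and nonzero). Then there exist uncountably many U_I(H)-conjugacy classes of Cartan subalgebras of I; more precisely, there exists a family (C_t)_{t ∈ [0, π/2)} of Cartan subalgebras of I such that whenever s ≠ t, there is no W ∈ U_I(H) with W C_s W* = C_t. -/

import Mathlib

/-!
For a Hilbert basis `f`, the operators of `I` that are diagonal in `f` form a Cartan subalgebra.
Maximality holds because the diagonal operators are exactly those commuting with the rank-one
projections onto the lines `ℂ f i`, and these projections lie in `I`.

Group a basis into pairs and rotate every pair by the angle `t`, giving a Hilbert basis `f_t`; let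
`C_t` be the set of operators of `I` diagonal in `f_t`. If a unitary `W` conjugates `C_s` onto
`C_t`, then the rank-one projection onto `W (f_s i)` is diagonal in `f_t`, so `W (f_s i)` is a
unimodular multiple of some `f_t j`. When `s - t` is not a multiple of `π / 2`, the inner products
`⟪f_s i, f_t j⟫` are bounded by some `m < 1`, so `‖(W - 1) (f_s i)‖ ≥ 1 - m` for all `i`. But
`W - 1` is compact, and a compact operator tends to zero along an infinite orthonormal family.
-/

open Set

/-- A (two-sided) operator ideal of `B(H)`. -/
def IsOperatorIdeal {H : Type*} [NormedAddCommGroup H] [InnerProductSpace ℂ H]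
    (I : Set (H →L[ℂ] H)) : Prop :=
  (0 : H →L[ℂ] H) ∈ I ∧
  (∀ A B : H →L[ℂ] H, A ∈ I → B ∈ I → A + B ∈ I) ∧
  (∀ (c : ℂ) (A : H →L[ℂ] H), A ∈ I → c • A ∈ I) ∧
  (∀ (T A : H →L[ℂ] H), A ∈ I → T * A ∈ I ∧ A * T ∈ I)

/-- `C` is a self-adjoint complex-linear subspace of `I` consisting of mutually
commuting operators. -/
def IsCommSelfAdjointSubspace {H : Type*} [NormedAddCommGroup H] [InnerProductSpace ℂ H]
    [CompleteSpace H] (I C : Set (H →L[ℂ] H)) : Prop :=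
  C ⊆ I ∧
  (0 : H →L[ℂ] H) ∈ C ∧
  (∀ S T : H →L[ℂ] H, S ∈ C → T ∈ C → S + T ∈ C) ∧
  (∀ (c : ℂ) (T : H →L[ℂ] H), T ∈ C → c • T ∈ C) ∧
  (∀ T ∈ C, star T ∈ C) ∧
  (∀ S T : H →L[ℂ] H, S ∈ C → T ∈ C → S * T = T * S)

/-- `C` is a Cartan subalgebra of the operator ideal `I`. -/
def IsCartanSubalgebra {H : Type*} [NormedAddCommGroup H] [InnerProductSpace ℂ H]
    [CompleteSpace H] (I C : Set (H →L[ℂ] H)) : Prop :=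
  IsCommSelfAdjointSubspace I C ∧
  ∀ C' : Set (H →L[ℂ] H), IsCommSelfAdjointSubspace I C' → C ⊆ C' → C' = C

section InnerProductSpaces

open InnerProductSpace

variable {𝕜 H E : Type*} [RCLike 𝕜] [NormedAddCommGroup H] [InnerProductSpace 𝕜 H]
  [NormedAddCommGroup E] [NormedSpace 𝕜 E]

lemma one_sub_norm_inner_le_norm_sub {u : H} (hu : ‖u‖ = 1) (x : H) :
    1 - ‖inner 𝕜 u x‖ ≤ ‖x - u‖ :=
  calc 1 - ‖inner 𝕜 u x‖ = ‖inner 𝕜 u u‖ - ‖inner 𝕜 u x‖ := by simp [hu]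
    _ ≤ ‖inner 𝕜 u (x - u)‖ := by
      rw [inner_sub_right, norm_sub_rev]
      exact norm_sub_norm_le _ _
    _ ≤ ‖x - u‖ := by simpa [hu] using norm_inner_le_norm (𝕜 := 𝕜) u (x - u)

lemma finiteDimensional_range_rankOne (x : E) (y : H) :
    FiniteDimensional 𝕜 (LinearMap.range (rankOne 𝕜 x y : H →ₗ[𝕜] E)) := by
  rw [rankOne_def', ContinuousLinearMap.toLinearMap_comp]
  exact Submodule.finiteDimensional_of_le (LinearMap.range_comp_le_range _ _)

end InnerProductSpaces

section CompactOperators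

open Filter Topology

variable {ι 𝕜 H E : Type*} [RCLike 𝕜] [NormedAddCommGroup H] [InnerProductSpace 𝕜 H]
  [NormedAddCommGroup E] [InnerProductSpace 𝕜 E]

lemma tendsto_inner_orthonormal_cofinite {u : ι → H} (hu : Orthonormal 𝕜 u) (x : H) :
    Tendsto (fun i => inner 𝕜 (u i) x) cofinite (𝓝 0) := by
  rw [tendsto_zero_iff_norm_tendsto_zero]
  simpa using (hu.inner_products_summable x).tendsto_cofinite_zero.sqrt

lemma tendsto_compactOperator_orthonormal_cofinite [CompleteSpace H] [CompleteSpace E]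
    {K : H →L[𝕜] E} (hK : IsCompactOperator K) {u : ι → H} (hu : Orthonormal 𝕜 u) :
    Tendsto (fun i => K (u i)) cofinite (𝓝 0) := by
  obtain ⟨S, hS, hKS⟩ :=
    hK.image_closedBall_subset_compact (f := (K : H →ₗ[𝕜] E)) 1
  have hmem (i : ι) : K (u i) ∈ S := hKS ⟨u i, by simp [hu.norm_eq_one i], rfl⟩
  refine hS.tendsto_nhds_of_unique_mapClusterPt (.of_forall hmem) fun y _ hy => ?_
  have hinner : MapClusterPt (inner 𝕜 y y) cofinite fun i => inner 𝕜 (K (u i)) y :=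
    hy.continuousAt_comp (f := fun x => inner 𝕜 x y) (by fun_prop)
  have hzero : Tendsto (fun i => inner 𝕜 (K (u i)) y) cofinite (𝓝 0) := by
    simpa only [ContinuousLinearMap.adjoint_inner_right] using
      tendsto_inner_orthonormal_cofinite hu (K.adjoint y)
  exact inner_self_eq_zero.mp (eq_of_nhds_neBot (hinner.clusterPt.mono hzero).neBot)

end CompactOperators

section HilbertBases

variable {ι κ 𝕜 H : Type*} [RCLike 𝕜] [NormedAddCommGroup H] [InnerProductSpace 𝕜 H]

lemma hilbertBasis_operator_ext {E : Type*} [AddCommMonoid E] [Module 𝕜 E] [TopologicalSpace E]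
    [T2Space E] (f : HilbertBasis ι 𝕜 H) {S T : H →L[𝕜] E}
    (h : ∀ i, S (f i) = T (f i)) : S = T :=
  ContinuousLinearMap.ext_on (Submodule.dense_iff_topologicalClosure_eq_top.mpr f.dense_span)
    (forall_mem_range.mpr h)

lemma hilbertBasis_exists_inner_ne_zero (f : HilbertBasis ι 𝕜 H) {x : H} (hx : x ≠ 0) :
    ∃ i, inner 𝕜 (f i) x ≠ 0 := by
  contrapose! hx
  exact f.repr.map_eq_zero_iff.mp <| lp.ext <| funext fun i => by
    simpa [f.repr_apply_apply] using hx i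

variable [CompleteSpace H]

/-- The Hilbert basis given by an orthonormal family whose span contains a Hilbert basis. -/
noncomputable def hilbertBasisOfMemSpan (b : HilbertBasis ι 𝕜 H) {v : κ → H}
    (hv : Orthonormal 𝕜 v) (hb : ∀ i, b i ∈ Submodule.span 𝕜 (range v)) : HilbertBasis κ 𝕜 H :=
  HilbertBasis.mk hv <| b.dense_span.ge.trans <|
    Submodule.topologicalClosure_mono (Submodule.span_le.mpr (range_subset_iff.mpr hb))

@[simp]
lemma coe_hilbertBasisOfMemSpan (b : HilbertBasis ι 𝕜 H) {v : κ → H}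
    (hv : Orthonormal 𝕜 v) (hb : ∀ i, b i ∈ Submodule.span 𝕜 (range v)) :
    ⇑(hilbertBasisOfMemSpan b hv hb) = v :=
  HilbertBasis.coe_mk hv _

lemma exists_hilbertBasis_prod_bool [Infinite ι] (b : HilbertBasis ι 𝕜 H) :
    Nonempty (HilbertBasis (ι × Bool) 𝕜 H) := by
  obtain ⟨σ⟩ : Nonempty (ι × Bool ≃ ι) := Cardinal.eq.mp <| by
    simpa using Cardinal.mul_eq_left (Cardinal.aleph0_le_mk ι)
      (Cardinal.natCast_lt_aleph0.le.trans (Cardinal.aleph0_le_mk ι)) two_ne_zero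
  exact ⟨hilbertBasisOfMemSpan b (b.orthonormal.comp σ σ.injective) fun i =>
    Submodule.subset_span ⟨σ.symm i, by simp⟩⟩

lemma exists_operator_apply_eq_smul_of_norm_one (f : HilbertBasis ι 𝕜 H) {v : ι → 𝕜}
    (hv : ∀ i, ‖v i‖ = 1) : ∃ V : H →L[𝕜] H, ∀ i, V (f i) = v i • f i := by
  classical
  have hne (i : ι) : v i ≠ 0 := norm_ne_zero_iff.mp (by simp [hv i])
  have horth : Orthonormal 𝕜 fun i => v i • f i := by
    refine ⟨fun i => by simp [norm_smul, hv, f.orthonormal.norm_eq_one], fun i j hij => ?_⟩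
    simp [inner_smul_left, inner_smul_right, f.orthonormal.inner_eq_zero hij]
  have hspan (i : ι) : f i ∈ Submodule.span 𝕜 (range fun i => v i • f i) :=
    (Submodule.smul_mem_iff _ (hne i)).mp (Submodule.subset_span ⟨i, rfl⟩)
  let g := hilbertBasisOfMemSpan f horth hspan
  refine ⟨(f.repr.trans g.repr.symm : H ≃ₗᵢ[𝕜] H).toContinuousLinearEquiv, fun i => ?_⟩
  change g.repr.symm (f.repr (f i)) = v i • f i
  rw [f.repr_self, g.repr_symm_single, coe_hilbertBasisOfMemSpan]

end HilbertBases

section DiagonalOperators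

open InnerProductSpace ComplexConjugate

variable {ι κ 𝕜 H : Type*} [RCLike 𝕜] [NormedAddCommGroup H] [InnerProductSpace 𝕜 H]
  [CompleteSpace H]

/-- The algebra of operators that are diagonal in the Hilbert basis `f`, encoded as the commutant
of the rank-one projections onto the lines spanned by the `f i`; see `mem_diagonalAlgebra_iff` for
the description by eigenvectors. -/
noncomputable def diagonalAlgebra (f : HilbertBasis ι 𝕜 H) : StarSubalgebra 𝕜 (H →L[𝕜] H) :=
  StarSubalgebra.centralizer 𝕜 (range fun i => rankOne 𝕜 (f i) (f i))

lemma mem_diagonalAlgebra_iff_commute {f : HilbertBasis ι 𝕜 H} {T : H →L[𝕜] H} :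
    T ∈ diagonalAlgebra f ↔ ∀ i, Commute (rankOne 𝕜 (f i) (f i)) T := by
  simp [diagonalAlgebra, StarSubalgebra.mem_centralizer_iff, Commute, SemiconjBy,
    ContinuousLinearMap.star_eq_adjoint]

lemma mem_diagonalAlgebra_iff {f : HilbertBasis ι 𝕜 H} {T : H →L[𝕜] H} :
    T ∈ diagonalAlgebra f ↔ ∀ i, ∃ c : 𝕜, T (f i) = c • f i := by
  rw [mem_diagonalAlgebra_iff_commute]
  constructor
  · intro h i
    have := DFunLike.congr_fun (h i).eq (f i)
    exact ⟨inner 𝕜 (f i) (T (f i)), by simpa [f.orthonormal.norm_eq_one] using this.symm⟩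
  · intro h i
    refine hilbertBasis_operator_ext f fun j => ?_
    obtain ⟨c, hc⟩ := h j
    obtain rfl | hij := eq_or_ne i j
    · simp [hc, f.orthonormal.norm_eq_one]
    · simp [hc, f.orthonormal.inner_eq_zero hij]

lemma rankOne_self_mem_diagonalAlgebra (f : HilbertBasis ι 𝕜 H) (i : ι) :
    rankOne 𝕜 (f i) (f i) ∈ diagonalAlgebra f := by
  classical
  refine mem_diagonalAlgebra_iff.mpr fun j => ⟨if i = j then 1 else 0, ?_⟩
  rw [rankOne_apply, orthonormal_iff_ite.mp f.orthonormal]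
  split_ifs with h <;> simp [h]

lemma diagonalAlgebra_mul_comm {f : HilbertBasis ι 𝕜 H} {S T : H →L[𝕜] H}
    (hS : S ∈ diagonalAlgebra f) (hT : T ∈ diagonalAlgebra f) : S * T = T * S := by
  refine hilbertBasis_operator_ext f fun i => ?_
  obtain ⟨a, ha⟩ := mem_diagonalAlgebra_iff.mp hS i
  obtain ⟨c, hc⟩ := mem_diagonalAlgebra_iff.mp hT i
  simp [ha, hc, smul_smul, mul_comm]

lemma star_apply_eq_conj_smul_of_mem_diagonalAlgebra {f : HilbertBasis ι 𝕜 H} {T : H →L[𝕜] H}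
    (hT : T ∈ diagonalAlgebra f) {i : ι} {c : 𝕜} (hc : T (f i) = c • f i) :
    star T (f i) = conj c • f i := by
  obtain ⟨d, hd⟩ := mem_diagonalAlgebra_iff.mp (star_mem hT) i
  have hinner : inner 𝕜 (f i) (star T (f i)) = inner 𝕜 (T (f i)) (f i) := by
    rw [ContinuousLinearMap.star_eq_adjoint, ContinuousLinearMap.adjoint_inner_right]
  have hdc : d = conj c := by
    simpa [hc, hd, inner_smul_left, inner_smul_right, f.orthonormal.norm_eq_one] using hinner
  rw [hd, hdc]

-- `V` is the diagonal unitary whose entries are the phases `conj c / c` of the eigenvalues of `T`;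
-- through `V`, the adjoint of a diagonal operator stays in every left ideal containing it.
lemma exists_star_eq_mul_of_mem_diagonalAlgebra {f : HilbertBasis ι 𝕜 H} {T : H →L[𝕜] H}
    (hT : T ∈ diagonalAlgebra f) : ∃ V : H →L[𝕜] H, star T = V * T := by
  choose c hc using mem_diagonalAlgebra_iff.mp hT
  have hphase (z : 𝕜) : ∃ v : 𝕜, ‖v‖ = 1 ∧ conj z = z * v := by
    obtain rfl | hz := eq_or_ne z 0
    · exact ⟨1, by simp⟩
    · exact ⟨conj z / z, by simp [hz], by field_simp⟩
  choose v hv hcv using fun i => hphase (c i)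
  obtain ⟨V, hV⟩ := exists_operator_apply_eq_smul_of_norm_one f hv
  refine ⟨V, hilbertBasis_operator_ext f fun i => ?_⟩
  have hstar := star_apply_eq_conj_smul_of_mem_diagonalAlgebra hT (hc i)
  simp [hstar, hc, hV, smul_smul, hcv]

lemma exists_eq_smul_of_rankOne_self_mem_diagonalAlgebra {g : HilbertBasis κ 𝕜 H} {x : H}
    (hx : rankOne 𝕜 x x ∈ diagonalAlgebra g) (hx0 : x ≠ 0) : ∃ (j : κ) (c : 𝕜), x = c • g j := by
  obtain ⟨j, hj⟩ := hilbertBasis_exists_inner_ne_zero g hx0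
  obtain ⟨c, hc⟩ := mem_diagonalAlgebra_iff.mp hx j
  have hj' : inner 𝕜 x (g j) ≠ 0 := inner_eq_zero_symm.not.mp hj
  exact ⟨j, (inner 𝕜 x (g j))⁻¹ * c, by
    rw [mul_smul, ← hc, rankOne_apply, inv_smul_smul₀ hj']⟩

lemma exists_apply_eq_smul_of_unitary_conj_mem_diagonalAlgebra {f : HilbertBasis ι 𝕜 H}
    {g : HilbertBasis κ 𝕜 H} {W : H →L[𝕜] H} (hW : W ∈ unitary (H →L[𝕜] H)) {i : ι}
    (h : W * rankOne 𝕜 (f i) (f i) * star W ∈ diagonalAlgebra g) :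
    ∃ (j : κ) (c : 𝕜), ‖c‖ = 1 ∧ W (f i) = c • g j := by
  have hconj : W * rankOne 𝕜 (f i) (f i) * star W = rankOne 𝕜 (W (f i)) (W (f i)) := by
    ext x
    simp [ContinuousLinearMap.star_eq_adjoint, ContinuousLinearMap.adjoint_inner_right]
  have hnorm : ‖W (f i)‖ = 1 := by
    rw [Unitary.norm_map ⟨W, hW⟩, f.orthonormal.norm_eq_one]
  obtain ⟨j, c, hc⟩ := exists_eq_smul_of_rankOne_self_mem_diagonalAlgebra (hconj ▸ h)
    (norm_ne_zero_iff.mp (by simp [hnorm]))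
  refine ⟨j, c, ?_, hc⟩
  simpa [hc, norm_smul, g.orthonormal.norm_eq_one] using hnorm

theorem unitary_conj_inter_diagonalAlgebra_ne [Infinite ι] {f : HilbertBasis ι 𝕜 H}
    {g : HilbertBasis κ 𝕜 H} {I : Set (H →L[𝕜] H)} (hfI : ∀ i, rankOne 𝕜 (f i) (f i) ∈ I)
    {m : ℝ} (hm : m < 1) (hfg : ∀ i j, ‖inner 𝕜 (f i) (g j)‖ ≤ m)
    {W : H →L[𝕜] H} (hW : W ∈ unitary (H →L[𝕜] H)) (hWK : IsCompactOperator (W - 1 : H →L[𝕜] H)) :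
    (fun T => W * T * star W) '' (I ∩ diagonalAlgebra f) ≠ I ∩ diagonalAlgebra g := by
  intro hconj
  have hlower (i : ι) : 1 - m ≤ ‖(W - 1) (f i)‖ := by
    have hmem : W * rankOne 𝕜 (f i) (f i) * star W ∈ I ∩ diagonalAlgebra g :=
      hconj ▸ mem_image_of_mem _ ⟨hfI i, rankOne_self_mem_diagonalAlgebra f i⟩
    obtain ⟨j, c, hc, hWf⟩ := exists_apply_eq_smul_of_unitary_conj_mem_diagonalAlgebra hW hmem.2
    have hinner : ‖inner 𝕜 (f i) (W (f i))‖ ≤ m := by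
      simpa [hWf, inner_smul_right, hc] using hfg i j
    exact (sub_le_sub_left hinner 1).trans
      (one_sub_norm_inner_le_norm_sub (f.orthonormal.norm_eq_one i) _)
  have hlimit := tendsto_zero_iff_norm_tendsto_zero.mp
    (tendsto_compactOperator_orthonormal_cofinite hWK f.orthonormal)
  have : 1 - m ≤ 0 := ge_of_tendsto' hlimit hlower
  linarith

end DiagonalOperators

section Rotation

variable {ι 𝕜 V H : Type*} [RCLike 𝕜] [AddCommGroup V] [Module 𝕜 V] [NormedAddCommGroup H]
  [InnerProductSpace 𝕜 H]

/-- The vector at angle `θ` in the plane spanned by the pair `e false`, `e true`, measured from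
`e false` towards `e true`; a unit vector when the pair is orthonormal. -/
noncomputable def vectorAtAngle (𝕜 : Type*) [RCLike 𝕜] [Module 𝕜 V] (e : Bool → V) (θ : ℝ) : V :=
  ((Real.cos θ : ℝ) : 𝕜) • e false + ((Real.sin θ : ℝ) : 𝕜) • e true

/-- The angle of `e i` in the plane spanned by a pair `e false`, `e true`. -/
noncomputable def axisAngle (i : Bool) : ℝ :=
  if i then Real.pi / 2 else 0

lemma vectorAtAngle_axisAngle (e : Bool → V) (i : Bool) :
    vectorAtAngle 𝕜 e (axisAngle i) = e i := by
  cases i <;> simp [vectorAtAngle, axisAngle]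

lemma vectorAtAngle_add (e : Bool → V) (θ φ : ℝ) :
    vectorAtAngle 𝕜 e (θ + φ) = ((Real.cos φ : ℝ) : 𝕜) • vectorAtAngle 𝕜 e θ +
      ((Real.sin φ : ℝ) : 𝕜) • vectorAtAngle 𝕜 e (θ + Real.pi / 2) := by
  simp only [vectorAtAngle, Real.cos_add, Real.sin_add, Real.cos_pi_div_two, Real.sin_pi_div_two]
  push_cast
  module

/-- The family `b` with each pair `b (n, false)`, `b (n, true)` rotated by the angle `t` in the
plane it spans. -/
noncomputable def rotatedFamily (𝕜 : Type*) [RCLike 𝕜] [Module 𝕜 V] (b : ι × Bool → V)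
    (t : ℝ) (p : ι × Bool) : V :=
  vectorAtAngle 𝕜 (fun i => b (p.1, i)) (t + axisAngle p.2)

lemma mem_span_range_rotatedFamily (b : ι × Bool → V) (t : ℝ) (p : ι × Bool) :
    b p ∈ Submodule.span 𝕜 (range (rotatedFamily 𝕜 b t)) := by
  obtain ⟨n, i⟩ := p
  have hfalse : vectorAtAngle 𝕜 (fun i => b (n, i)) t ∈ range (rotatedFamily 𝕜 b t) :=
    ⟨(n, false), by simp [rotatedFamily, axisAngle]⟩
  have htrue : vectorAtAngle 𝕜 (fun i => b (n, i)) (t + Real.pi / 2) ∈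
      range (rotatedFamily 𝕜 b t) :=
    ⟨(n, true), by simp [rotatedFamily, axisAngle]⟩
  have hspan := vectorAtAngle_add (𝕜 := 𝕜) (fun i => b (n, i)) t (axisAngle i - t)
  rw [add_sub_cancel, vectorAtAngle_axisAngle] at hspan
  rw [hspan]
  exact add_mem (Submodule.smul_mem _ _ (Submodule.subset_span hfalse))
    (Submodule.smul_mem _ _ (Submodule.subset_span htrue))

lemma inner_rotatedFamily [DecidableEq ι] {b : ι × Bool → H} (hb : Orthonormal 𝕜 b) (s t : ℝ)
    (p q : ι × Bool) :
    inner 𝕜 (rotatedFamily 𝕜 b s p) (rotatedFamily 𝕜 b t q) =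
      if p.1 = q.1 then ((Real.cos (s + axisAngle p.2 - (t + axisAngle q.2)) : ℝ) : 𝕜) else 0 := by
  simp only [rotatedFamily, vectorAtAngle, inner_add_left, inner_add_right, inner_smul_left,
    inner_smul_right, orthonormal_iff_ite.mp hb, Prod.mk.injEq, RCLike.conj_ofReal]
  split_ifs <;> simp_all [Real.cos_sub, mul_comm]

lemma orthonormal_rotatedFamily {b : ι × Bool → H} (hb : Orthonormal 𝕜 b) (t : ℝ) :
    Orthonormal 𝕜 (rotatedFamily 𝕜 b t) := by
  classical
  rw [orthonormal_iff_ite]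
  rintro ⟨n, i⟩ ⟨m, j⟩
  rw [inner_rotatedFamily hb]
  cases i <;> cases j <;> simp [axisAngle]

/-- The Hilbert basis obtained from `b` by rotating each pair `b (n, false)`, `b (n, true)` by the
angle `t`. -/
noncomputable def rotatedBasis [CompleteSpace H] (b : HilbertBasis (ι × Bool) 𝕜 H) (t : ℝ) :
    HilbertBasis (ι × Bool) 𝕜 H :=
  hilbertBasisOfMemSpan b (orthonormal_rotatedFamily b.orthonormal t)
    (mem_span_range_rotatedFamily b t)

lemma abs_cos_lt_one_of_sin_ne_zero {x : ℝ} (hx : Real.sin x ≠ 0) : |Real.cos x| < 1 := by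
  rw [← sq_lt_one_iff_abs_lt_one]
  linarith [Real.sin_sq_add_cos_sq x, sq_pos_of_ne_zero hx]

lemma abs_cos_axisAngle_sub_lt_one {s t : ℝ} (hs : s ∈ Ico 0 (Real.pi / 2))
    (ht : t ∈ Ico 0 (Real.pi / 2)) (hst : s ≠ t) (i j : Bool) :
    |Real.cos (s + axisAngle i - (t + axisAngle j))| < 1 := by
  obtain ⟨hs0, hsπ⟩ := hs
  obtain ⟨ht0, htπ⟩ := ht
  refine abs_cos_lt_one_of_sin_ne_zero fun hsin => ?_
  have hlower : -Real.pi < s + axisAngle i - (t + axisAngle j) := by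
    cases i <;> cases j <;> grind [axisAngle]
  have hupper : s + axisAngle i - (t + axisAngle j) < Real.pi := by
    cases i <;> cases j <;> grind [axisAngle]
  have hzero : s + axisAngle i - (t + axisAngle j) = 0 :=
    (Real.sin_eq_zero_iff_of_lt_of_lt hlower hupper).mp hsin
  cases i <;> cases j <;> grind [axisAngle]

lemma exists_lt_one_norm_inner_rotatedBasis_le [CompleteSpace H]
    (b : HilbertBasis (ι × Bool) 𝕜 H) {s t : ℝ} (hs : s ∈ Ico 0 (Real.pi / 2))
    (ht : t ∈ Ico 0 (Real.pi / 2)) (hst : s ≠ t) :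
    ∃ m < 1, ∀ p q, ‖inner 𝕜 (rotatedBasis b s p) (rotatedBasis b t q)‖ ≤ m := by
  classical
  obtain ⟨k, hk⟩ := Finite.exists_max fun k : Bool × Bool =>
    |Real.cos (s + axisAngle k.1 - (t + axisAngle k.2))|
  refine ⟨_, abs_cos_axisAngle_sub_lt_one hs ht hst k.1 k.2, fun p q => ?_⟩
  simp only [rotatedBasis, coe_hilbertBasisOfMemSpan, inner_rotatedFamily b.orthonormal]
  split_ifs
  · simpa using hk (p.2, q.2)
  · simp

end Rotation

section CartanSubalgebras

open InnerProductSpace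

variable {ι H : Type*} [NormedAddCommGroup H] [InnerProductSpace ℂ H]

/-- The left ideal of the ring `B(H)` underlying an operator ideal. -/
def IsOperatorIdeal.toIdeal {I : Set (H →L[ℂ] H)} (hI : IsOperatorIdeal I) :
    Ideal (H →L[ℂ] H) where
  carrier := I
  zero_mem' := hI.1
  add_mem' := hI.2.1 _ _
  smul_mem' T A hA := (hI.2.2.2 T A hA).1

variable [CompleteSpace H]

theorem isCartanSubalgebra_inter_diagonalAlgebra (f : HilbertBasis ι ℂ H)
    {I : Ideal (H →L[ℂ] H)} (hfI : ∀ i, rankOne ℂ (f i) (f i) ∈ I) :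
    IsCartanSubalgebra (I : Set (H →L[ℂ] H)) (I ∩ diagonalAlgebra f) := by
  refine ⟨⟨inter_subset_left, ⟨I.zero_mem, zero_mem _⟩,
    fun S T hS hT => ⟨I.add_mem hS.1 hT.1, add_mem hS.2 hT.2⟩,
    fun c T hT => ⟨?_, (diagonalAlgebra f).smul_mem hT.2 c⟩,
    fun T hT => ⟨?_, star_mem hT.2⟩,
    fun S T hS hT => diagonalAlgebra_mul_comm hS.2 hT.2⟩, ?_⟩
  · simpa using I.mul_mem_left (c • 1) hT.1
  · obtain ⟨V, hV⟩ := exists_star_eq_mul_of_mem_diagonalAlgebra hT.2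
    exact hV ▸ I.mul_mem_left V hT.1
  · rintro C' ⟨hC'I, -, -, -, -, hcomm⟩ hsub
    refine Subset.antisymm (fun T hT => ⟨hC'I hT, ?_⟩) hsub
    exact mem_diagonalAlgebra_iff_commute.mpr fun i =>
      hcomm _ _ (hsub ⟨hfI i, rankOne_self_mem_diagonalAlgebra f i⟩) hT

theorem uncountably_many_conjugacy_classes_of_cartan_subalgebras_general [Infinite ι]
    (b : HilbertBasis ι ℂ H) (I : Ideal (H →L[ℂ] H))
    (hFI : ∀ T : H →L[ℂ] H, FiniteDimensional ℂ (LinearMap.range (T : H →ₗ[ℂ] H)) → T ∈ I) :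
    ∃ C : ℝ → Set (H →L[ℂ] H),
      (∀ t, IsCartanSubalgebra (I : Set (H →L[ℂ] H)) (C t)) ∧
      (∀ s ∈ Ico (0 : ℝ) (Real.pi / 2), ∀ t ∈ Ico (0 : ℝ) (Real.pi / 2), s ≠ t →
        ¬ ∃ W : H →L[ℂ] H, W ∈ unitary (H →L[ℂ] H) ∧ IsCompactOperator (W - 1 : H →L[ℂ] H) ∧
          (fun T : H →L[ℂ] H => W * T * star W) '' C s = C t) := by
  obtain ⟨e⟩ := exists_hilbertBasis_prod_bool b
  have hrankOne (x : H) : rankOne ℂ x x ∈ I := hFI _ (finiteDimensional_range_rankOne x x)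
  refine ⟨fun t => I ∩ diagonalAlgebra (rotatedBasis e t),
    fun t => isCartanSubalgebra_inter_diagonalAlgebra _ fun _ => hrankOne _, ?_⟩
  rintro s hs t ht hst ⟨W, hW, hWK, hconj⟩
  obtain ⟨m, hm, hinner⟩ := exists_lt_one_norm_inner_rotatedBasis_le e hs ht hst
  exact unitary_conj_inter_diagonalAlgebra_ne (fun _ => hrankOne _) hm hinner hW hWK hconj

end CartanSubalgebras

/-- Let `I` be an operator ideal with `F(H) ⊆ I ⊆ K(H)` (a proper nonzero
ideal).  Then there exists a family `(C_t)_{t ∈ [0, π/2)}` of Cartan subalgebras of `I` which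
are pairwise not `U_I(H)`-conjugate; in particular there are uncountably many
`U_I(H)`-conjugacy classes of Cartan subalgebras of `I`. -/
theorem uncountably_many_conjugacy_classes_of_cartan_subalgebras
    {H : Type*} [NormedAddCommGroup H] [InnerProductSpace ℂ H] [CompleteSpace H]
    (b : HilbertBasis ℕ ℂ H)
    (I : Set (H →L[ℂ] H)) (hI : IsOperatorIdeal I)
    (hFI : ∀ T : H →L[ℂ] H,
      FiniteDimensional ℂ (LinearMap.range (T : H →ₗ[ℂ] H)) → T ∈ I)
    (hIK : ∀ T ∈ I, IsCompactOperator (T : H →L[ℂ] H)) :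
    ∃ C : ℝ → Set (H →L[ℂ] H),
      (∀ t ∈ Ico (0 : ℝ) (Real.pi / 2), IsCartanSubalgebra I (C t)) ∧
      (∀ s ∈ Ico (0 : ℝ) (Real.pi / 2), ∀ t ∈ Ico (0 : ℝ) (Real.pi / 2), s ≠ t →
        ¬ ∃ W : H →L[ℂ] H, W ∈ unitary (H →L[ℂ] H) ∧ W - 1 ∈ I ∧
          (fun T : H →L[ℂ] H => W * T * star W) '' C s = C t) := by
  obtain ⟨C, hC, hconj⟩ :=
    uncountably_many_conjugacy_classes_of_cartan_subalgebras_general b hI.toIdeal hFI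
  exact ⟨C, fun t _ => hC t, fun s hs t ht hst ⟨W, hW, hWI, h⟩ =>
    hconj s hs t ht hst ⟨W, hW, hIK _ hWI, h⟩⟩
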